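/- Let a : Σ → ℕ be an arity and R an algebraic conditional rewrite system respecting a. For every i ∈ ℕ, if t ∈ AN_a and t →*_{β ∪ R_i} u, then u ∈ AN_a and βnf(t) →*_{R_i} βnf(u). -/

import Mathlib

/-!
The proof replaces the relation `IsBnf t n` by big-step normal-order evaluation `Eval t n`, and
follows it along a nested parallel reduction `Par` for the union of β and one stratum of `R`.
The two notions of normal form agree by standardization (`IsBnf.eval`), proved with Kashima's
standard reductions `Std`. Evaluation is deterministic, so β-normal forms are unique, and
projecting the β-steps of `Par` shows that they preserve the normal form; confluence of β is
not needed separately.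

By induction on `Eval t n`, with `n` respecting `a`, a step `Par t u` yields a normal form `m`
of `u` which respects `a` and satisfies `n →* m` (`projects_par_aux`).

* If `t` has a head β-redex, left-hand sides cannot overlap it, so the step commutes with the
  head step (`Par.head_commute`). Parallelism is what makes the substituted copies of the
  argument move together.
* If `t` is a spine `h t₁ … tₖ` and the step acts on the arguments, the induction hypothesis
  applies to each of them.
* If a rule `l ↦ r` is contracted on the spine, the arity bound on `n` forces the spine to be
  all of `lσ`, with no extra arguments (`Par.appList_inv`). Algebraic terms create no β-redexes
  under substitution, so the normal forms are `n = lσ'` and `m = rτ'`, where `σ'` and `τ'` are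
  pointwise normal forms of `σ` and `τ`. The conditions hold for `σ'` because the previous
  stratum projects, by an outer induction on `i` (`projects_rule`); hence
  `lσ' → rσ' →* rτ'`.

Going to normal forms in one stroke is essential: the rules may be non-left-linear and
conditional, so a redex `lσ` need not remain one while `σ` is only partially β-reduced.
-/

set_option autoImplicit false

/-- λ-terms over a signature `Sig`, in de Bruijn representation
(terms are identified up to α-conversion). -/
inductive Tm (Sig : Type) : Type
  | var : ℕ → Tm Sig
  | app : Tm Sig → Tm Sig → Tm Sig
  | lam : Tm Sig → Tm Sig
  | sym : Sig → Tm Sig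

namespace Tm

variable {Sig : Type}

/-- Shift the free de Bruijn indices `≥ d` up by one. -/
def lift (d : ℕ) : Tm Sig → Tm Sig
  | var n => if n < d then var n else var (n + 1)
  | app t u => app (lift d t) (lift d u)
  | lam t => lam (lift (d + 1) t)
  | sym f => sym f

/-- Lift a parallel substitution under one binder. -/
def up (σ : ℕ → Tm Sig) : ℕ → Tm Sig
  | 0 => var 0
  | n + 1 => lift 0 (σ n)

/-- Capture-avoiding (parallel) substitution. -/
def subst (σ : ℕ → Tm Sig) : Tm Sig → Tm Sig
  | var n => σ n
  | app t u => app (subst σ t) (subst σ u)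
  | lam t => lam (subst (up σ) t)
  | sym f => sym f

def scons (u : Tm Sig) (σ : ℕ → Tm Sig) : ℕ → Tm Sig
  | 0 => u
  | n + 1 => σ n

/-- `subst1 u t` substitutes `u` for the de Bruijn variable `0` in `t`. -/
def subst1 (u t : Tm Sig) : Tm Sig := subst (scons u var) t

/-- `FVar t n` : de Bruijn index `n` occurs free in `t`. -/
def FVar : Tm Sig → ℕ → Prop
  | var m, n => m = n
  | app t u, n => FVar t n ∨ FVar u n
  | lam t, n => FVar t (n + 1)
  | sym _, _ => False

/-- Closed terms. -/
def ClosedTm (t : Tm Sig) : Prop := ∀ n, ¬ FVar t n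

def countVar : Tm Sig → ℕ → ℕ
  | var m, n => if m = n then 1 else 0
  | app t u, n => countVar t n + countVar u n
  | lam t, n => countVar t (n + 1)
  | sym _, _ => 0

/-- Linear terms: each variable occurs at most once. -/
def LinearTm (t : Tm Sig) : Prop := ∀ n, countVar t n ≤ 1

/-- `appList h [t1, …, tn] = h t1 … tn`. -/
def appList (h : Tm Sig) : List (Tm Sig) → Tm Sig
  | [] => h
  | u :: us => appList (app h u) us

/-- Applicative terms: terms containing no abstraction. -/
inductive Applicative : Tm Sig → Prop
  | var (n : ℕ) : Applicative (var n)
  | sym (f : Sig) : Applicative (sym f)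
  | app {t u : Tm Sig} : Applicative t → Applicative u → Applicative (app t u)

/-- Algebraic terms: `t ::= x | f t1 … tn`. -/
inductive Algebraic : Tm Sig → Prop
  | var (n : ℕ) : Algebraic (var n)
  | symApp (f : Sig) (ts : List (Tm Sig)) :
      (∀ t ∈ ts, Algebraic t) → Algebraic (appList (sym f) ts)

/-- `Subterm s t` : `s` is a subterm of `t`. -/
inductive Subterm : Tm Sig → Tm Sig → Prop
  | refl (t : Tm Sig) : Subterm t t
  | appL {s t u : Tm Sig} : Subterm s t → Subterm s (app t u)
  | appR {s t u : Tm Sig} : Subterm s u → Subterm s (app t u)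
  | lam {s t : Tm Sig} : Subterm s t → Subterm s (lam t)

/-- `lamN m t = λ…λ.t` with `m` abstractions. -/
def lamN : ℕ → Tm Sig → Tm Sig
  | 0, t => t
  | m + 1, t => lam (lamN m t)

end Tm

/-- β-reduction: the smallest rewrite relation (closed under abstraction, left and
right application and substitution) with `(λ.t) u →β t[0 := u]`. -/
inductive Beta {Sig : Type} : Tm Sig → Tm Sig → Prop
  | beta (t u : Tm Sig) : Beta (Tm.app (Tm.lam t) u) (Tm.subst1 u t)
  | abs {t u : Tm Sig} : Beta t u → Beta (Tm.lam t) (Tm.lam u)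
  | appL {t u v : Tm Sig} : Beta t u → Beta (Tm.app t v) (Tm.app u v)
  | appR {t u v : Tm Sig} : Beta t u → Beta (Tm.app v t) (Tm.app v u)
  | substC (σ : ℕ → Tm Sig) {t u : Tm Sig} : Beta t u → Beta (Tm.subst σ t) (Tm.subst σ u)

/-- Tait–Martin-Löf parallel β-reduction: the smallest parallel rewrite relation
with `(λ.t₁) t₂ ▷β u₁[0 := u₂]` whenever `t₁ ▷β u₁` and `t₂ ▷β u₂`. -/
inductive PBeta {Sig : Type} : Tm Sig → Tm Sig → Prop
  | var (n : ℕ) : PBeta (Tm.var n) (Tm.var n)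
  | sym (f : Sig) : PBeta (Tm.sym f) (Tm.sym f)
  | app {t₁ u₁ t₂ u₂ : Tm Sig} : PBeta t₁ u₁ → PBeta t₂ u₂ →
      PBeta (Tm.app t₁ t₂) (Tm.app u₁ u₂)
  | abs {t u : Tm Sig} : PBeta t u → PBeta (Tm.lam t) (Tm.lam u)
  | substC (σ : ℕ → Tm Sig) {t u : Tm Sig} : PBeta t u → PBeta (Tm.subst σ t) (Tm.subst σ u)
  | beta {t₁ u₁ t₂ u₂ : Tm Sig} : PBeta t₁ u₁ → PBeta t₂ u₂ →
      PBeta (Tm.app (Tm.lam t₁) t₂) (Tm.subst1 u₂ u₁)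

/-- β-normal forms. -/
def BetaNormal {Sig : Type} (t : Tm Sig) : Prop := ∀ u, ¬ Beta t u

/-- `IsBnf t n` : `n` is a β-normal form of `t`. -/
def IsBnf {Sig : Type} (t n : Tm Sig) : Prop :=
  Relation.ReflTransGen Beta t n ∧ BetaNormal n

/-- Weakly β-normalizing terms. -/
def WNbeta {Sig : Type} (t : Tm Sig) : Prop := ∃ n, IsBnf t n

/-- Conditional rewrite rule `d1 = c1 ∧ … ∧ dn = cn ⊃ l ↦ r`:  every variable of
the `di`, `ci` and `r` occurs in `l`, and `l` is a non-variable algebraic term. -/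
structure CondRule (Sig : Type) where
  conds : List (Tm Sig × Tm Sig)
  lhs : Tm Sig
  rhs : Tm Sig
  lhs_alg : Tm.Algebraic lhs
  lhs_not_var : ∀ n, lhs ≠ Tm.var n
  fv_conds : ∀ p ∈ conds,
    (∀ n, Tm.FVar p.1 n → Tm.FVar lhs n) ∧ (∀ n, Tm.FVar p.2 n → Tm.FVar lhs n)
  fv_rhs : ∀ n, Tm.FVar rhs n → Tm.FVar lhs n

/-- Joinability: a common reduct. -/
def Joinable {α : Type} (R : α → α → Prop) (t u : α) : Prop :=
  ∃ v, Relation.ReflTransGen R t v ∧ Relation.ReflTransGen R u v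

/-- One stratum of conditional rewriting: the smallest rewrite relation such that
`lσ → rσ` for every rule whose conditions are joinable w.r.t. `prev`. -/
inductive CondStep {Sig : Type} (Rules : Set (CondRule Sig))
    (prev : Tm Sig → Tm Sig → Prop) : Tm Sig → Tm Sig → Prop
  | rule {ρ : CondRule Sig} (hρ : ρ ∈ Rules) (σ : ℕ → Tm Sig)
      (hconds : ∀ p ∈ ρ.conds, Joinable prev (Tm.subst σ p.1) (Tm.subst σ p.2)) :
      CondStep Rules prev (Tm.subst σ ρ.lhs) (Tm.subst σ ρ.rhs)
  | abs {t u : Tm Sig} : CondStep Rules prev t u →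
      CondStep Rules prev (Tm.lam t) (Tm.lam u)
  | appL {t u v : Tm Sig} : CondStep Rules prev t u →
      CondStep Rules prev (Tm.app t v) (Tm.app u v)
  | appR {t u v : Tm Sig} : CondStep Rules prev t u →
      CondStep Rules prev (Tm.app v t) (Tm.app v u)
  | substC (σ : ℕ → Tm Sig) {t u : Tm Sig} : CondStep Rules prev t u →
      CondStep Rules prev (Tm.subst σ t) (Tm.subst σ u)

/-- Stratified conditional rewriting `→_{R_i}`. -/
def CondRel {Sig : Type} (Rules : Set (CondRule Sig)) : ℕ → Tm Sig → Tm Sig → Prop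
  | 0 => fun _ _ => False
  | i + 1 => CondStep Rules (CondRel Rules i)

/-- Conditional rewriting `→_R = ⋃ i, →_{R_i}`. -/
def CondRew {Sig : Type} (Rules : Set (CondRule Sig)) (t u : Tm Sig) : Prop :=
  ∃ i, CondRel Rules i t u

/-- Stratified β-conditional rewriting `→_{R(β)_i}`: conditions are evaluated
w.r.t. `→_{β ∪ R(β)_{i-1}}`. -/
def BCondRel {Sig : Type} (Rules : Set (CondRule Sig)) : ℕ → Tm Sig → Tm Sig → Prop
  | 0 => fun _ _ => False
  | i + 1 => CondStep Rules (fun a b => Beta a b ∨ BCondRel Rules i a b)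

/-- β-conditional rewriting `→_{R(β)} = ⋃ i, →_{R(β)_i}`. -/
def BCondRew {Sig : Type} (Rules : Set (CondRule Sig)) (t u : Tm Sig) : Prop :=
  ∃ i, BCondRel Rules i t u

def IsConfluent {α : Type} (R : α → α → Prop) : Prop :=
  ∀ t u v, Relation.ReflTransGen R t u → Relation.ReflTransGen R t v →
    ∃ w, Relation.ReflTransGen R u w ∧ Relation.ReflTransGen R v w

def ConfluentOn {α : Type} (S : Set α) (R : α → α → Prop) : Prop :=
  ∀ t ∈ S, ∀ u v, Relation.ReflTransGen R t u → Relation.ReflTransGen R t v →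
    ∃ w, Relation.ReflTransGen R u w ∧ Relation.ReflTransGen R v w

def Commutes {α : Type} (R₁ R₂ : α → α → Prop) : Prop :=
  ∀ s u t, Relation.ReflTransGen R₁ s u → Relation.ReflTransGen R₂ s t →
    ∃ v, Relation.ReflTransGen R₂ u v ∧ Relation.ReflTransGen R₁ t v

def LeftLinear {Sig : Type} (Rules : Set (CondRule Sig)) : Prop :=
  ∀ ρ ∈ Rules, Tm.LinearTm ρ.lhs

/-- Semi-closed systems: in every rule the `ci` are closed applicative terms. -/
def SemiClosed {Sig : Type} (Rules : Set (CondRule Sig)) : Prop :=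
  ∀ ρ ∈ Rules, ∀ p ∈ ρ.conds, Tm.Applicative p.2 ∧ Tm.ClosedTm p.2

def RightApplicative {Sig : Type} (Rules : Set (CondRule Sig)) : Prop :=
  ∀ ρ ∈ Rules, Tm.Applicative ρ.rhs

def RightAlgebraic {Sig : Type} (Rules : Set (CondRule Sig)) : Prop :=
  ∀ ρ ∈ Rules, Tm.Algebraic ρ.rhs

/-- Algebraic systems: in every rule the `di`, `ci` and `r` are algebraic. -/
def AlgebraicSys {Sig : Type} (Rules : Set (CondRule Sig)) : Prop :=
  ∀ ρ ∈ Rules, (∀ p ∈ ρ.conds, Tm.Algebraic p.1 ∧ Tm.Algebraic p.2) ∧ Tm.Algebraic ρ.rhs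

/-- A term respects the arity `a` if it contains no subterm `f t1 … tn` with `n > a f`. -/
def RespectsArity {Sig : Type} (a : Sig → ℕ) (t : Tm Sig) : Prop :=
  ∀ (f : Sig) (ts : List (Tm Sig)),
    Tm.Subterm (Tm.appList (Tm.sym f) ts) t → ts.length ≤ a f

/-- A conditional rule respects `a` if the `di`, `ci` and both sides of `l ↦ r`
respect `a`, and `l = f l1 … lk` with `k = a f`. -/
def RuleRespectsArity {Sig : Type} (a : Sig → ℕ) (ρ : CondRule Sig) : Prop :=
  (∀ p ∈ ρ.conds, RespectsArity a p.1 ∧ RespectsArity a p.2) ∧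
  RespectsArity a ρ.lhs ∧ RespectsArity a ρ.rhs ∧
  ∃ (f : Sig) (ls : List (Tm Sig)), ρ.lhs = Tm.appList (Tm.sym f) ls ∧ ls.length = a f

def SysRespectsArity {Sig : Type} (a : Sig → ℕ) (Rules : Set (CondRule Sig)) : Prop :=
  ∀ ρ ∈ Rules, RuleRespectsArity a ρ

/-- `AN_a` : terms having a β-normal form, whose β-normal form respects `a`. -/
def ANset {Sig : Type} (a : Sig → ℕ) : Set (Tm Sig) :=
  {t | ∃ n, IsBnf t n ∧ RespectsArity a n}

/-- The rewrite relation of the unconditional system `R̄` containing `l ↦ di` and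
`l ↦ r` for each rule `d⃗ = c⃗ ⊃ l ↦ r` of `R`. -/
inductive BarRel {Sig : Type} (Rules : Set (CondRule Sig)) : Tm Sig → Tm Sig → Prop
  | ruleCond {ρ : CondRule Sig} (hρ : ρ ∈ Rules) {p : Tm Sig × Tm Sig} (hp : p ∈ ρ.conds)
      (σ : ℕ → Tm Sig) : BarRel Rules (Tm.subst σ ρ.lhs) (Tm.subst σ p.1)
  | ruleRhs {ρ : CondRule Sig} (hρ : ρ ∈ Rules) (σ : ℕ → Tm Sig) :
      BarRel Rules (Tm.subst σ ρ.lhs) (Tm.subst σ ρ.rhs)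
  | abs {t u : Tm Sig} : BarRel Rules t u → BarRel Rules (Tm.lam t) (Tm.lam u)
  | appL {t u v : Tm Sig} : BarRel Rules t u → BarRel Rules (Tm.app t v) (Tm.app u v)
  | appR {t u v : Tm Sig} : BarRel Rules t u → BarRel Rules (Tm.app v t) (Tm.app v u)
  | substC (σ : ℕ → Tm Sig) {t u : Tm Sig} : BarRel Rules t u →
      BarRel Rules (Tm.subst σ t) (Tm.subst σ u)

/-- Conditionally `(R, a)`-stable sets of terms. -/
def CondStable {Sig : Type} (Rules : Set (CondRule Sig)) (a : Sig → ℕ)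
    (S : Set (Tm Sig)) : Prop :=
  (∀ t ∈ S, RespectsArity a t) ∧
  (∀ t ∈ S, ∀ u, (Beta t u ∨ BarRel Rules t u) → u ∈ S) ∧
  (∀ t ∈ S, ∀ u, Tm.Subterm u t → u ∈ S)

/-- Head β-step along an application spine. -/
inductive HeadAux {Sig : Type} : Tm Sig → Tm Sig → Prop
  | beta (b a₀ : Tm Sig) : HeadAux (Tm.app (Tm.lam b) a₀) (Tm.subst1 a₀ b)
  | app {t u : Tm Sig} (v : Tm Sig) : HeadAux t u → HeadAux (Tm.app t v) (Tm.app u v)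

/-- Head β-reduction `→h` : `λx⃗.(λy.b) a₀ a₁ … aₙ →h λx⃗.b[y:=a₀] a₁ … aₙ`. -/
inductive HeadRed {Sig : Type} : Tm Sig → Tm Sig → Prop
  | base {t u : Tm Sig} : HeadAux t u → HeadRed t u
  | lam {t u : Tm Sig} : HeadRed t u → HeadRed (Tm.lam t) (Tm.lam u)

/-- The relation `≻` : (a) `λx⃗.v a1 … an ≻ ai` for `v` a variable or a symbol and
`n > 0`; (b) `λx⃗.(λy.b) a0 a1 … an ≻ λx⃗.b[y:=a0] a1 … an` (a head β-step). -/
def SuccRel {Sig : Type} (t u : Tm Sig) : Prop :=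
  (∃ (m : ℕ) (h : Tm Sig) (args : List (Tm Sig)),
    ((∃ n, h = Tm.var n) ∨ (∃ f, h = Tm.sym f)) ∧ args ≠ [] ∧
    t = Tm.lamN m (Tm.appList h args) ∧ u ∈ args)
  ∨ HeadRed t u

/-- The nested parallelization `▷_{R_i}` of `→_{R_i}`: the smallest parallel rewrite
relation with `lσ ▷ rτ` whenever `lσ →_{R_i} rσ` and `σ ▷ τ`. -/
inductive NPar {Sig : Type} (Rules : Set (CondRule Sig)) (i : ℕ) : Tm Sig → Tm Sig → Prop
  | var (n : ℕ) : NPar Rules i (Tm.var n) (Tm.var n)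
  | sym (f : Sig) : NPar Rules i (Tm.sym f) (Tm.sym f)
  | app {t₁ u₁ t₂ u₂ : Tm Sig} : NPar Rules i t₁ u₁ → NPar Rules i t₂ u₂ →
      NPar Rules i (Tm.app t₁ t₂) (Tm.app u₁ u₂)
  | abs {t u : Tm Sig} : NPar Rules i t u → NPar Rules i (Tm.lam t) (Tm.lam u)
  | substC (σ : ℕ → Tm Sig) {t u : Tm Sig} : NPar Rules i t u →
      NPar Rules i (Tm.subst σ t) (Tm.subst σ u)
  | rule {ρ : CondRule Sig} (hρ : ρ ∈ Rules) (σ τ : ℕ → Tm Sig)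
      (hstep : CondRel Rules i (Tm.subst σ ρ.lhs) (Tm.subst σ ρ.rhs))
      (hστ : ∀ n, NPar Rules i (σ n) (τ n)) :
      NPar Rules i (Tm.subst σ ρ.lhs) (Tm.subst τ ρ.rhs)

/-- The smallest parallel rewrite relation containing `R`. -/
inductive ParCl {Sig : Type} (R : Tm Sig → Tm Sig → Prop) : Tm Sig → Tm Sig → Prop
  | base {t u : Tm Sig} : R t u → ParCl R t u
  | var (n : ℕ) : ParCl R (Tm.var n) (Tm.var n)
  | sym (f : Sig) : ParCl R (Tm.sym f) (Tm.sym f)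
  | app {t₁ u₁ t₂ u₂ : Tm Sig} : ParCl R t₁ u₁ → ParCl R t₂ u₂ →
      ParCl R (Tm.app t₁ t₂) (Tm.app u₁ u₂)
  | abs {t u : Tm Sig} : ParCl R t u → ParCl R (Tm.lam t) (Tm.lam u)
  | substC (σ : ℕ → Tm Sig) {t u : Tm Sig} : ParCl R t u →
      ParCl R (Tm.subst σ t) (Tm.subst σ u)

/-- A rooted β-conditional rewrite step `lσ →_{R(β)_i} rσ` for the rule `ρ` and the
substitution `σ`: `ρ ∈ R` and the conditions of `ρ` instantiated by `σ` are joinable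
w.r.t. `→_{β ∪ R(β)_{i-1}}`. -/
def RootedBStep {Sig : Type} (Rules : Set (CondRule Sig)) :
    ℕ → CondRule Sig → (ℕ → Tm Sig) → Prop
  | 0 => fun _ _ => False
  | i + 1 => fun ρ σ => ρ ∈ Rules ∧
      ∀ p ∈ ρ.conds,
        Joinable (fun a b => Beta a b ∨ BCondRel Rules i a b)
          (Tm.subst σ p.1) (Tm.subst σ p.2)

/-- Subterm at a position (positions only descend through applications, which is
enough for algebraic left-hand sides). -/
def subtermAt {Sig : Type} : Tm Sig → List Bool → Option (Tm Sig)
  | t, [] => some t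
  | Tm.app a _, false :: p => subtermAt a p
  | Tm.app _ b, true :: p => subtermAt b p
  | _, _ :: _ => none

/-- Replacement at a position. -/
def replaceAt {Sig : Type} : Tm Sig → List Bool → Tm Sig → Option (Tm Sig)
  | _, [], s => some s
  | Tm.app a b, false :: p, s => (replaceAt a p s).map (fun a' => Tm.app a' b)
  | Tm.app a b, true :: p, s => (replaceAt b p s).map (fun b' => Tm.app a b')
  | _, _ :: _, _ => none

/-- Conditional critical pairs: an overlap of `ρ₂` at a non-variable position `p` of
the left-hand side of `ρ₁` via a most general unifier (here presented with a pair of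
substitutions, which accounts for variable-disjoint renamings). -/
def CriticalPair {Sig : Type} (Rules : Set (CondRule Sig))
    (conds : List (Tm Sig × Tm Sig)) (s t : Tm Sig) : Prop :=
  ∃ ρ₁ ∈ Rules, ∃ ρ₂ ∈ Rules, ∃ (p : List Bool) (w : Tm Sig) (σ₁ σ₂ : ℕ → Tm Sig),
    subtermAt ρ₁.lhs p = some w ∧
    (∀ n, w ≠ Tm.var n) ∧
    ¬ (ρ₁ = ρ₂ ∧ p = []) ∧
    Tm.subst σ₁ w = Tm.subst σ₂ ρ₂.lhs ∧
    (∀ τ₁ τ₂ : ℕ → Tm Sig, Tm.subst τ₁ w = Tm.subst τ₂ ρ₂.lhs →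
      ∃ δ : ℕ → Tm Sig, (∀ n, Tm.FVar ρ₁.lhs n → τ₁ n = Tm.subst δ (σ₁ n)) ∧
        (∀ n, Tm.FVar ρ₂.lhs n → τ₂ n = Tm.subst δ (σ₂ n))) ∧
    conds = ρ₁.conds.map (fun q => (Tm.subst σ₁ q.1, Tm.subst σ₁ q.2)) ++
            ρ₂.conds.map (fun q => (Tm.subst σ₂ q.1, Tm.subst σ₂ q.2)) ∧
    replaceAt (Tm.subst σ₁ ρ₁.lhs) p (Tm.subst σ₂ ρ₂.rhs) = some s ∧
    t = Tm.subst σ₁ ρ₁.rhs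

/-- A symbol is defined if it heads the left-hand side of some rule. -/
def DefinedSym {Sig : Type} (Rules : Set (CondRule Sig)) (f : Sig) : Prop :=
  ∃ ρ ∈ Rules, ∃ ts : List (Tm Sig), ρ.lhs = Tm.appList (Tm.sym f) ts

/-- OrthonormalSys systems. -/
def OrthonormalSys {Sig : Type} (Rules : Set (CondRule Sig)) : Prop :=
  LeftLinear Rules ∧
  (∀ ρ ∈ Rules, ∀ p ∈ ρ.conds, Tm.ClosedTm p.2 ∧ BetaNormal p.2 ∧
    ∀ f, DefinedSym Rules f → ¬ Tm.Subterm (Tm.sym f) p.2) ∧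
  (∀ (conds : List (Tm Sig × Tm Sig)) (s t : Tm Sig), CriticalPair Rules conds s t →
    ∃ i j : Fin conds.length, i ≠ j ∧
      (conds.get i).1 = (conds.get j).1 ∧ (conds.get i).2 ≠ (conds.get j).2)

/-- Dershowitz–Manna multiset extension of `<` on `ℕ`. -/
def MulLt (s t : Multiset ℕ) : Prop :=
  ∃ X Y Z : Multiset ℕ, Y ≠ 0 ∧ s = Z + X ∧ t = Z + Y ∧ ∀ x ∈ X, ∃ y ∈ Y, x < y

/-! ### Substitution calculus -/

namespace Tm

variable {Sig : Type}

/-- Simultaneous renaming of de Bruijn indices. -/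
def ren (ξ : ℕ → ℕ) : Tm Sig → Tm Sig
  | var n => var (ξ n)
  | app t u => app (ren ξ t) (ren ξ u)
  | lam t => lam (ren (fun n => Nat.casesOn n 0 (fun k => ξ k + 1)) t)
  | sym f => sym f

theorem lift_eq_ren (d : ℕ) (t : Tm Sig) :
    lift d t = ren (fun n => if n < d then n else n + 1) t := by
  induction t generalizing d with
  | var n => simp only [lift, ren]; split <;> rfl
  | app t u iht ihu => simp only [lift, ren, iht, ihu]
  | lam t ih =>
    simp only [lift, ren, ih]
    congr 2
    funext n
    cases n with
    | zero => simp
    | succ k => by_cases h : k < d <;> simp [h]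
  | sym f => rfl

theorem lift_zero_eq_ren (t : Tm Sig) : lift 0 t = ren Nat.succ t := by
  rw [lift_eq_ren]; simp

theorem ren_ren (ξ ζ : ℕ → ℕ) (t : Tm Sig) :
    ren ξ (ren ζ t) = ren (fun n => ξ (ζ n)) t := by
  induction t generalizing ξ ζ with
  | var n => rfl
  | app t u iht ihu => simp only [ren, iht, ihu]
  | lam t ih =>
    simp only [ren, ih]
    congr 2
    funext n
    cases n <;> rfl
  | sym f => rfl

theorem subst_ren (σ : ℕ → Tm Sig) (ζ : ℕ → ℕ) (t : Tm Sig) :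
    subst σ (ren ζ t) = subst (fun n => σ (ζ n)) t := by
  induction t generalizing σ ζ with
  | var n => rfl
  | app t u iht ihu => simp only [ren, subst, iht, ihu]
  | lam t ih =>
    simp only [ren, subst, ih]
    congr 2
    funext n
    cases n <;> rfl
  | sym f => rfl

theorem ren_subst (ξ : ℕ → ℕ) (σ : ℕ → Tm Sig) (t : Tm Sig) :
    ren ξ (subst σ t) = subst (fun n => ren ξ (σ n)) t := by
  induction t generalizing σ ξ with
  | var n => rfl
  | app t u iht ihu => simp only [ren, subst, iht, ihu]
  | lam t ih =>
    simp only [ren, subst, ih]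
    congr 2
    funext n
    cases n with
    | zero => rfl
    | succ k => simp only [up, lift_zero_eq_ren, ren_ren]
  | sym f => rfl

theorem subst_subst (σ τ : ℕ → Tm Sig) (t : Tm Sig) :
    subst σ (subst τ t) = subst (fun n => subst σ (τ n)) t := by
  induction t generalizing σ τ with
  | var n => rfl
  | app t u iht ihu => simp only [subst, iht, ihu]
  | lam t ih =>
    simp only [subst, ih]
    congr 2
    funext n
    cases n with
    | zero => rfl
    | succ k => simp only [up, lift_zero_eq_ren, subst_ren, ren_subst]
  | sym f => rfl

theorem subst_var (t : Tm Sig) : subst var t = t := by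
  induction t with
  | var n => rfl
  | app t u iht ihu => simp only [subst, iht, ihu]
  | lam t ih =>
    have : up (var : ℕ → Tm Sig) = var := by
      funext n
      cases n <;> rfl
    simp only [subst, this, ih]
  | sym f => rfl

theorem lift_zero_eq_subst (t : Tm Sig) : lift 0 t = subst (fun n => var (n + 1)) t := by
  rw [lift_zero_eq_ren, ← subst_var (ren _ t), subst_ren]

theorem subst_subst1 (σ : ℕ → Tm Sig) (u t : Tm Sig) :
    subst σ (subst1 u t) = subst1 (subst σ u) (subst (up σ) t) := by
  simp only [subst1, subst_subst]
  congr 1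
  funext n
  cases n with
  | zero => rfl
  | succ k =>
    simp only [up, scons, lift_zero_eq_ren, subst_ren]
    exact (subst_var _).symm

/-! ### Application spines -/

/-- Variables and function symbols: the possible heads of a neutral spine. -/
def Atom (h : Tm Sig) : Prop := (∃ n, h = var n) ∨ ∃ f, h = sym f

theorem atom_sym (f : Sig) : Atom (sym f) := Or.inr ⟨f, rfl⟩

theorem appList_snoc (h : Tm Sig) (as : List (Tm Sig)) (b : Tm Sig) :
    appList h (as ++ [b]) = app (appList h as) b := by
  induction as generalizing h with
  | nil => rfl
  | cons a as ih => exact ih _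

theorem subst_appList (σ : ℕ → Tm Sig) (h : Tm Sig) (as : List (Tm Sig)) :
    subst σ (appList h as) = appList (subst σ h) (as.map (subst σ)) := by
  induction as generalizing h with
  | nil => rfl
  | cons a as ih => exact ih _

theorem appList_ne_lam {h : Tm Sig} (hh : Atom h) (as : List (Tm Sig)) (t : Tm Sig) :
    appList h as ≠ lam t := by
  induction as using List.reverseRecOn with
  | nil => rcases hh with ⟨n, rfl⟩ | ⟨f, rfl⟩ <;> simp [appList]
  | append_singleton as a ih => simp [appList_snoc]

theorem appList_inj {h h' : Tm Sig} (hh : Atom h) (hh' : Atom h') (as bs : List (Tm Sig))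
    (e : appList h as = appList h' bs) : h = h' ∧ as = bs := by
  induction as using List.reverseRecOn generalizing bs with
  | nil =>
    induction bs using List.reverseRecOn with
    | nil => exact ⟨e, rfl⟩
    | append_singleton bs b _ =>
      rw [appList_snoc] at e
      rcases hh with ⟨n, rfl⟩ | ⟨f, rfl⟩ <;> simp [appList] at e
  | append_singleton as a ih =>
    induction bs using List.reverseRecOn with
    | nil =>
      rw [appList_snoc] at e
      rcases hh' with ⟨n, rfl⟩ | ⟨f, rfl⟩ <;> simp [appList] at e
    | append_singleton bs b _ =>
      rw [appList_snoc, appList_snoc] at e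
      injection e with e1 e2
      obtain ⟨h1, h2⟩ := ih bs e1
      exact ⟨h1, by rw [h2, e2]⟩

theorem not_headAux_appList {h : Tm Sig} (hh : Atom h) (as : List (Tm Sig)) (u : Tm Sig) :
    ¬ HeadAux (appList h as) u := by
  induction as using List.reverseRecOn generalizing u with
  | nil => rcases hh with ⟨n, rfl⟩ | ⟨f, rfl⟩ <;> (intro H; cases H)
  | append_singleton as a ih =>
    rw [appList_snoc]
    generalize e : appList h as = x at ih
    intro H
    cases H with
    | beta b => exact appList_ne_lam hh as b e
    | app _ H => exact ih _ H

theorem fvar_appList {f : Tm Sig} {ts : List (Tm Sig)} {n : ℕ} :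
    FVar (appList f ts) n ↔ FVar f n ∨ ∃ t ∈ ts, FVar t n := by
  induction ts generalizing f with
  | nil => simp [appList]
  | cons a as ih => simp [appList, ih, FVar, or_assoc]

theorem subterm_appList_head {s : Tm Sig} (as : List (Tm Sig)) {h : Tm Sig}
    (H : Subterm s h) : Subterm s (appList h as) := by
  induction as generalizing h with
  | nil => exact H
  | cons a as ih => exact ih (Subterm.appL H)

theorem subterm_appList_arg {s b : Tm Sig} {as : List (Tm Sig)} (h : Tm Sig) (hb : b ∈ as)
    (H : Subterm s b) : Subterm s (appList h as) := by
  induction as generalizing h with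
  | nil => simp at hb
  | cons a as ih =>
    rcases List.mem_cons.1 hb with rfl | hb
    · exact subterm_appList_head as (Subterm.appR H)
    · exact ih _ hb

theorem subterm_appList {s h : Tm Sig} (hh : Atom h) {as : List (Tm Sig)}
    (H : Subterm s (appList h as)) :
    (∃ b ∈ as, Subterm s b) ∨ ∃ bs, s = appList h bs ∧ bs.length ≤ as.length := by
  induction as using List.reverseRecOn with
  | nil =>
    rcases hh with ⟨n, rfl⟩ | ⟨f, rfl⟩ <;>
    · cases H
      exact Or.inr ⟨[], rfl, le_rfl⟩
  | append_singleton as a ih =>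
    rw [appList_snoc] at H
    cases H with
    | refl => exact Or.inr ⟨as ++ [a], (appList_snoc _ _ _).symm, le_rfl⟩
    | appL H =>
      rcases ih H with ⟨b, hb, h1⟩ | ⟨bs, h1, h2⟩
      · exact Or.inl ⟨b, by simp [hb], h1⟩
      · exact Or.inr ⟨bs, h1, by simp; omega⟩
    | appR H => exact Or.inl ⟨a, by simp, H⟩

theorem respectsArity_appList (a : Sig → ℕ) {h : Tm Sig} (hh : Atom h) (ts : List (Tm Sig)) :
    RespectsArity a (appList h ts) ↔
      (∀ f, h = sym f → ts.length ≤ a f) ∧ ∀ t ∈ ts, RespectsArity a t := by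
  constructor
  · intro H
    refine ⟨?_, fun t ht f us hs => H f us (subterm_appList_arg _ ht hs)⟩
    rintro f rfl
    exact H f ts (Subterm.refl _)
  · rintro ⟨H1, H2⟩ f us hs
    rcases subterm_appList hh hs with ⟨b, hb, h1⟩ | ⟨bs, h1, h2⟩
    · exact H2 b hb f us h1
    · obtain ⟨e1, rfl⟩ := appList_inj (atom_sym f) hh _ _ h1
      have := H1 f e1.symm
      omega

theorem respectsArity_lam (a : Sig → ℕ) (t : Tm Sig) :
    RespectsArity a (lam t) ↔ RespectsArity a t := by
  constructor
  · exact fun H f us hs => H f us (Subterm.lam hs)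
  · intro H f us hs
    generalize e : appList (sym f) us = x at hs
    cases hs with
    | refl => exact absurd e (appList_ne_lam (atom_sym f) _ _)
    | lam hs => exact H f us (e ▸ hs)

/-- Instantiating an algebraic term preserves arities, because its variables are never
applied. -/
theorem respectsArity_subst (a : Sig → ℕ) {d : Tm Sig} (hd : Algebraic d)
    (ha : RespectsArity a d) {σ : ℕ → Tm Sig} (hσ : ∀ n, FVar d n → RespectsArity a (σ n)) :
    RespectsArity a (subst σ d) := by
  induction hd with
  | var n => exact hσ n rfl
  | symApp f ts hts ih =>
    rw [respectsArity_appList a (atom_sym f)] at ha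
    rw [subst_appList]
    refine (respectsArity_appList a (atom_sym f) _).2 ⟨by simpa using ha.1, ?_⟩
    intro s hs
    obtain ⟨t, ht, rfl⟩ := List.mem_map.1 hs
    exact ih t ht (ha.2 t ht) fun n hn => hσ n (fvar_appList.2 (Or.inr ⟨t, ht, hn⟩))

end Tm

open Tm

/-- The left-hand side of a rule is a function symbol applied to algebraic arguments. -/
theorem CondRule.lhs_eq {Sig : Type} (ρ : CondRule Sig) :
    ∃ (f : Sig) (ls : List (Tm Sig)), ρ.lhs = appList (sym f) ls := by
  have h1 := ρ.lhs_alg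
  have h2 := ρ.lhs_not_var
  generalize ρ.lhs = l at h1 h2
  cases h1 with
  | var n => exact absurd rfl (h2 n)
  | symApp f ts _ => exact ⟨f, ts, rfl⟩

theorem CondRule.subst_lhs_eq {Sig : Type} (ρ : CondRule Sig) (σ : ℕ → Tm Sig) :
    ∃ (f : Sig) (ls : List (Tm Sig)), subst σ ρ.lhs = appList (sym f) ls := by
  obtain ⟨f, ls, e⟩ := ρ.lhs_eq
  exact ⟨f, _, by rw [e, subst_appList]; rfl⟩

/-! ### Parallel reduction for β and the rules -/

/-- Nested parallel reduction for the union of β and one stratum of conditional rewriting,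
whose conditions are evaluated in `prev`. -/
inductive Par {Sig : Type} (Rules : Set (CondRule Sig)) (prev : Tm Sig → Tm Sig → Prop) :
    Tm Sig → Tm Sig → Prop
  | var (n : ℕ) : Par Rules prev (Tm.var n) (Tm.var n)
  | sym (f : Sig) : Par Rules prev (Tm.sym f) (Tm.sym f)
  | app {t t' u u' : Tm Sig} : Par Rules prev t t' → Par Rules prev u u' →
      Par Rules prev (Tm.app t u) (Tm.app t' u')
  | lam {t t' : Tm Sig} : Par Rules prev t t' → Par Rules prev (Tm.lam t) (Tm.lam t')
  | beta {t t' u u' : Tm Sig} : Par Rules prev t t' → Par Rules prev u u' →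
      Par Rules prev (Tm.app (Tm.lam t) u) (Tm.subst1 u' t')
  | rule {ρ : CondRule Sig} (hρ : ρ ∈ Rules) (σ τ : ℕ → Tm Sig)
      (hconds : ∀ p ∈ ρ.conds, Joinable prev (Tm.subst σ p.1) (Tm.subst σ p.2))
      (hστ : ∀ n, Par Rules prev (σ n) (τ n)) :
      Par Rules prev (Tm.subst σ ρ.lhs) (Tm.subst τ ρ.rhs)

/-- Closure of a relation under substitution. -/
def SubstClosed {Sig : Type} (R : Tm Sig → Tm Sig → Prop) : Prop :=
  ∀ (σ : ℕ → Tm Sig) (t u : Tm Sig), R t u → R (subst σ t) (subst σ u)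

theorem Joinable.subst {Sig : Type} {R : Tm Sig → Tm Sig → Prop} (hR : SubstClosed R)
    (σ : ℕ → Tm Sig) {t u : Tm Sig} (h : Joinable R t u) :
    Joinable R (subst σ t) (subst σ u) := by
  obtain ⟨v, h1, h2⟩ := h
  exact ⟨Tm.subst σ v, h1.lift _ (hR σ), h2.lift _ (hR σ)⟩

namespace Par

variable {Sig : Type} {Rules : Set (CondRule Sig)} {prev : Tm Sig → Tm Sig → Prop}

theorem refl (t : Tm Sig) : Par Rules prev t t := by
  induction t with
  | var n => exact .var n
  | app t u iht ihu => exact .app iht ihu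
  | lam t ih => exact .lam ih
  | sym f => exact .sym f

theorem subst_left (hp : SubstClosed prev) {t u : Tm Sig} (h : Par Rules prev t u)
    (σ : ℕ → Tm Sig) : Par Rules prev (subst σ t) (subst σ u) := by
  induction h generalizing σ with
  | var n => exact refl _
  | sym f => exact .sym f
  | app _ _ ih1 ih2 => exact .app (ih1 σ) (ih2 σ)
  | lam _ ih => exact .lam (ih _)
  | beta _ _ ih1 ih2 =>
    rw [subst_subst1]
    exact .beta (ih1 _) (ih2 σ)
  | rule hρ σ₀ τ₀ hc _ ih =>
    rw [subst_subst, subst_subst]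
    refine .rule hρ _ _ (fun p hpc => ?_) fun n => ih n σ
    rw [← subst_subst, ← subst_subst]
    exact (hc p hpc).subst hp σ

theorem up (hp : SubstClosed prev) {σ τ : ℕ → Tm Sig} (h : ∀ n, Par Rules prev (σ n) (τ n))
    (n : ℕ) : Par Rules prev (Tm.up σ n) (Tm.up τ n) := by
  cases n with
  | zero => exact .var 0
  | succ k =>
    simp only [Tm.up, lift_zero_eq_subst]
    exact (h k).subst_left hp _

theorem subst (hp : SubstClosed prev) {t u : Tm Sig} (h : Par Rules prev t u)
    {σ τ : ℕ → Tm Sig} (hστ : ∀ n, Par Rules prev (σ n) (τ n)) :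
    Par Rules prev (Tm.subst σ t) (Tm.subst τ u) := by
  induction h generalizing σ τ with
  | var n => exact hστ n
  | sym f => exact .sym f
  | app _ _ ih1 ih2 => exact .app (ih1 hστ) (ih2 hστ)
  | lam _ ih => exact .lam (ih (up hp hστ))
  | beta _ _ ih1 ih2 =>
    rw [subst_subst1]
    exact .beta (ih1 (up hp hστ)) (ih2 hστ)
  | rule hρ σ₀ τ₀ hc _ ih =>
    rw [subst_subst, subst_subst]
    refine .rule hρ _ _ (fun p hpc => ?_) fun n => ih n hστ
    rw [← subst_subst, ← subst_subst]
    exact (hc p hpc).subst hp σ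

theorem subst1 (hp : SubstClosed prev) {t t' u u' : Tm Sig} (h : Par Rules prev t t')
    (hu : Par Rules prev u u') : Par Rules prev (Tm.subst1 u t) (Tm.subst1 u' t') := by
  refine h.subst hp fun n => ?_
  cases n with
  | zero => exact hu
  | succ k => exact .var k

theorem of_beta (hp : SubstClosed prev) {t u : Tm Sig} (h : Beta t u) : Par Rules prev t u := by
  induction h with
  | beta t u => exact .beta (refl _) (refl _)
  | abs _ ih => exact .lam ih
  | appL _ ih => exact .app ih (refl _)
  | appR _ ih => exact .app (refl _) ih
  | substC σ _ ih => exact ih.subst_left hp σ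

theorem of_condStep (hp : SubstClosed prev) {t u : Tm Sig} (h : CondStep Rules prev t u) :
    Par Rules prev t u := by
  induction h with
  | rule hρ σ hc => exact .rule hρ σ σ hc fun _ => refl _
  | abs _ ih => exact .lam ih
  | appL _ ih => exact .app ih (refl _)
  | appR _ ih => exact .app (refl _) ih
  | substC σ _ ih => exact ih.subst_left hp σ

theorem lam_inv {t u : Tm Sig} (h : Par Rules prev (Tm.lam t) u) :
    ∃ t', u = Tm.lam t' ∧ Par Rules prev t t' := by
  generalize e : Tm.lam t = x at h
  cases h with
  | var | sym | app | beta => simp at e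
  | lam h =>
    cases e
    exact ⟨_, rfl, h⟩
  | rule hρ σ τ hc hστ =>
    obtain ⟨f, ls, e'⟩ := CondRule.subst_lhs_eq ‹_› σ
    exact absurd (e.trans e').symm (appList_ne_lam (atom_sym f) _ _)

/-- Rewrite rules do not touch a head β-redex, since their left-hand sides are headed by a
symbol; so a parallel step commutes with a head β-step. -/
theorem head_commute (hp : SubstClosed prev) {t t' u : Tm Sig} (hd : HeadAux t t')
    (h : Par Rules prev t u) : ∃ u', Par Rules prev t' u' ∧ (u = u' ∨ HeadAux u u') := by
  induction hd generalizing u with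
  | beta b a₀ =>
    generalize e : Tm.app (Tm.lam b) a₀ = x at h
    cases h with
    | var | sym | lam => simp at e
    | app h1 h2 =>
      cases e
      obtain ⟨b', rfl, hb⟩ := h1.lam_inv
      exact ⟨_, hb.subst1 hp h2, Or.inr (.beta _ _)⟩
    | beta h1 h2 =>
      cases e
      exact ⟨_, h1.subst1 hp h2, Or.inl rfl⟩
    | rule hρ σ τ hc hστ =>
      obtain ⟨f, ls, e'⟩ := CondRule.subst_lhs_eq ‹_› σ
      have := not_headAux_appList (atom_sym f) ls (Tm.subst1 a₀ b)
      exact absurd (.beta _ _) ((e.trans e') ▸ this)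
  | @app t t' v hd ih =>
    generalize e : Tm.app t v = x at h
    cases h with
    | var | sym | lam => simp at e
    | app h1 h2 =>
      cases e
      obtain ⟨u', h3, h4⟩ := ih h1
      refine ⟨_, .app h3 h2, ?_⟩
      rcases h4 with rfl | h4
      · exact Or.inl rfl
      · exact Or.inr (.app _ h4)
    | beta h1 h2 =>
      cases e
      cases hd
    | rule hρ σ τ hc hστ =>
      obtain ⟨f, ls, e'⟩ := CondRule.subst_lhs_eq ‹_› σ
      have := not_headAux_appList (atom_sym f) ls (Tm.app t' v)
      exact absurd (.app _ hd) ((e.trans e') ▸ this)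

/-- A parallel step from a neutral spine with no more arguments than its arity allows either
acts on the arguments or rewrites the whole spine: a rule headed by `f` consumes exactly `a f`
arguments, so none are left over. -/
theorem appList_inv {a : Sig → ℕ} (harr : SysRespectsArity a Rules) {h : Tm Sig} (hh : Atom h)
    {as : List (Tm Sig)} (hlen : ∀ f, h = Tm.sym f → as.length ≤ a f) {u : Tm Sig}
    (H : Par Rules prev (appList h as) u) :
    (∃ us, u = appList h us ∧ List.Forall₂ (Par Rules prev) as us) ∨
    ∃ ρ ∈ Rules, ∃ σ τ : ℕ → Tm Sig,
      (∀ p ∈ ρ.conds, Joinable prev (Tm.subst σ p.1) (Tm.subst σ p.2)) ∧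
      (∀ n, Par Rules prev (σ n) (τ n)) ∧
      appList h as = Tm.subst σ ρ.lhs ∧ u = Tm.subst τ ρ.rhs := by
  induction as using List.reverseRecOn generalizing u with
  | nil =>
    simp only [appList] at H ⊢
    cases H with
    | var => exact Or.inl ⟨[], rfl, .nil⟩
    | sym => exact Or.inl ⟨[], rfl, .nil⟩
    | app | lam | beta => rcases hh with ⟨n, e⟩ | ⟨f, e⟩ <;> simp at e
    | rule hρ σ τ hc hστ => exact Or.inr ⟨_, hρ, σ, τ, hc, hστ, rfl, rfl⟩
  | append_singleton as b ih =>
    have ih := fun {u} => @ih (fun f e => by have := hlen f e; simp at this; omega) u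
    rw [appList_snoc] at H ⊢
    generalize e : Tm.app (appList h as) b = x at H
    cases H with
    | var | sym | lam => simp at e
    | app h1 h2 =>
      cases e
      rcases ih h1 with ⟨us, rfl, hus⟩ | ⟨ρ, hρ, σ, τ, _, _, e, _⟩
      · refine Or.inl ⟨us ++ [_], (appList_snoc _ _ _).symm, ?_⟩
        exact List.rel_append hus (.cons h2 .nil)
      · obtain ⟨_, _, _, f, ls, e1, e2⟩ := harr ρ hρ
        rw [e1, subst_appList] at e
        obtain ⟨rfl, rfl⟩ := appList_inj hh (atom_sym f) _ _ e
        have := hlen f rfl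
        simp at this
        omega
    | beta h1 h2 =>
      injection e with e1 _
      exact absurd e1 (appList_ne_lam hh _ _)
    | rule hρ σ τ hc hστ => exact Or.inr ⟨_, hρ, σ, τ, hc, hστ, rfl, rfl⟩

end Par

/-! ### Structural β-reduction and β-normal forms -/

/-- β-reduction without the closure under substitution as a constructor. -/
inductive BetaS {Sig : Type} : Tm Sig → Tm Sig → Prop
  | beta (t u : Tm Sig) : BetaS (Tm.app (Tm.lam t) u) (Tm.subst1 u t)
  | abs {t u : Tm Sig} : BetaS t u → BetaS (Tm.lam t) (Tm.lam u)
  | appL {t u v : Tm Sig} : BetaS t u → BetaS (Tm.app t v) (Tm.app u v)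
  | appR {t u v : Tm Sig} : BetaS t u → BetaS (Tm.app v t) (Tm.app v u)

section Beta

variable {Sig : Type}

theorem BetaS.subst {t u : Tm Sig} (h : BetaS t u) (σ : ℕ → Tm Sig) :
    BetaS (Tm.subst σ t) (Tm.subst σ u) := by
  induction h generalizing σ with
  | beta t u => rw [subst_subst1]; exact .beta _ _
  | abs _ ih => exact .abs (ih _)
  | appL _ ih => exact .appL (ih _)
  | appR _ ih => exact .appR (ih _)

theorem Beta.toBetaS {t u : Tm Sig} (h : Beta t u) : BetaS t u := by
  induction h with
  | beta t u => exact .beta _ _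
  | abs _ ih => exact .abs ih
  | appL _ ih => exact .appL ih
  | appR _ ih => exact .appR ih
  | substC σ _ ih => exact ih.subst σ

theorem HeadAux.toBeta {t u : Tm Sig} (h : HeadAux t u) : Beta t u := by
  induction h with
  | beta b a₀ => exact .beta _ _
  | app v _ ih => exact .appL ih

theorem HeadAux.subst {t u : Tm Sig} (h : HeadAux t u) (σ : ℕ → Tm Sig) :
    HeadAux (Tm.subst σ t) (Tm.subst σ u) := by
  induction h with
  | beta b a₀ => rw [subst_subst1]; exact .beta _ _
  | app v _ ih => exact .app _ ih

theorem HeadAux.deterministic {t u v : Tm Sig} (h : HeadAux t u) (h' : HeadAux t v) : u = v := by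
  induction h generalizing v with
  | beta b a₀ =>
    cases h' with
    | beta => rfl
    | app _ h => cases h
  | app w h ih =>
    cases h' with
    | beta => cases h
    | app _ h' => rw [ih h']

theorem BetaS.toBeta {t u : Tm Sig} (h : BetaS t u) : Beta t u := by
  induction h with
  | beta t u => exact .beta _ _
  | abs _ ih => exact .abs ih
  | appL _ ih => exact .appL ih
  | appR _ ih => exact .appR ih

theorem BetaNormal.lam {t : Tm Sig} (h : BetaNormal t) : BetaNormal (Tm.lam t) := by
  intro u hu
  cases hu.toBetaS with
  | abs h' => exact h _ h'.toBeta

theorem BetaNormal.appList {h : Tm Sig} (hh : Atom h) {ts : List (Tm Sig)}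
    (hts : ∀ t ∈ ts, BetaNormal t) : BetaNormal (Tm.appList h ts) := by
  induction ts using List.reverseRecOn with
  | nil =>
    intro u hu
    have hu := hu.toBetaS
    rcases hh with ⟨n, rfl⟩ | ⟨f, rfl⟩ <;> cases hu
  | append_singleton ts t ih =>
    have ih := ih fun s hs => hts s (by simp [hs])
    intro u hu
    have hu' := hu.toBetaS
    clear hu
    rw [appList_snoc] at hu'
    generalize e : Tm.app (Tm.appList h ts) t = x at hu'
    cases hu' with
    | beta =>
      injection e with e1 _
      exact appList_ne_lam hh _ _ e1
    | abs => simp at e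
    | appL h1 =>
      cases e
      exact ih _ h1.toBeta
    | appR h1 =>
      cases e
      exact hts t (by simp) _ h1.toBeta

/-- Argumentwise reductions lift to application spines. -/
theorem rtg_appList {R : Tm Sig → Tm Sig → Prop}
    (hl : ∀ t u v, R t u → R (Tm.app t v) (Tm.app u v))
    (hr : ∀ t u v, R t u → R (Tm.app v t) (Tm.app v u))
    {ts us : List (Tm Sig)} (H : List.Forall₂ (Relation.ReflTransGen R) ts us)
    {h h' : Tm Sig} (hh : Relation.ReflTransGen R h h') :
    Relation.ReflTransGen R (Tm.appList h ts) (Tm.appList h' us) := by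
  induction H generalizing h h' with
  | nil => exact hh
  | @cons t u ts us htu _ ih =>
    exact ih ((hh.lift (fun x => Tm.app x t) fun x y => hl x y t).trans
      (htu.lift (fun x => Tm.app h' x) fun x y => hr x y h'))

end Beta

/-! ### Normal-order evaluation -/

/-- Big-step normal-order evaluation: `Eval t n` holds when leftmost reduction of `t` ends in
the β-normal form `n`. The arguments of a spine and their values are given as a list of pairs. -/
inductive Eval {Sig : Type} : Tm Sig → Tm Sig → Prop
  | lam {t n : Tm Sig} : Eval t n → Eval (Tm.lam t) (Tm.lam n)
  | spine {h : Tm Sig} (hh : Tm.Atom h) (l : List (Tm Sig × Tm Sig)) :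
      (∀ p ∈ l, Eval p.1 p.2) →
      Eval (Tm.appList h (l.map Prod.fst)) (Tm.appList h (l.map Prod.snd))
  | head {t u n : Tm Sig} : HeadAux t u → Eval u n → Eval t n

section Eval

variable {Sig : Type}

theorem Eval.heads {t u n : Tm Sig} (h : Relation.ReflTransGen HeadAux t u) (hu : Eval u n) :
    Eval t n := by
  induction h using Relation.ReflTransGen.head_induction_on with
  | refl => exact hu
  | head h _ ih => exact .head h ih

theorem Eval.isBnf {t n : Tm Sig} (h : Eval t n) : IsBnf t n := by
  induction h with
  | lam _ ih => exact ⟨ih.1.lift Tm.lam fun _ _ => Beta.abs, ih.2.lam⟩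
  | spine hh l _ ih =>
    constructor
    · refine rtg_appList (fun _ _ _ => Beta.appL) (fun _ _ _ => Beta.appR) ?_ .refl
      rw [List.forall₂_map_left_iff, List.forall₂_map_right_iff, List.forall₂_same]
      exact fun p hp => (ih p hp).1
    · refine BetaNormal.appList hh fun t ht => ?_
      obtain ⟨p, hp, rfl⟩ := List.mem_map.1 ht
      exact (ih p hp).2
  | head h _ ih => exact ⟨.head h.toBeta ih.1, ih.2⟩

theorem Eval.deterministic {t n m : Tm Sig} (h : Eval t n) (h' : Eval t m) : n = m := by
  induction h generalizing m with
  | @lam t n _ ih =>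
    generalize e : Tm.lam t = x at h'
    cases h' with
    | lam h' => cases e; rw [ih h']
    | spine hh => exact absurd e.symm (appList_ne_lam hh _ _)
    | head h' => subst e; cases h'
  | @spine h hh l hl ih =>
    generalize e : Tm.appList h (l.map Prod.fst) = x at h'
    cases h' with
    | lam h' => exact absurd e (appList_ne_lam hh _ _)
    | spine hh' l' hl' =>
      obtain ⟨rfl, e'⟩ := appList_inj hh hh' _ _ e
      clear e hh hh'
      congr 1
      induction l generalizing l' with
      | nil =>
        cases l' with
        | nil => rfl
        | cons => simp at e'
      | cons p l ihl =>
        cases l' with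
        | nil => simp at e'
        | cons p' l' =>
          simp only [List.map_cons, List.cons.injEq] at e' ⊢
          refine ⟨ih p (by simp) (e'.1 ▸ hl' p' (by simp)), ?_⟩
          exact ihl (fun q hq => hl q (by simp [hq])) (fun q hq => ih q (by simp [hq])) l'
            (fun q hq => hl' q (by simp [hq])) e'.2
    | head h' => subst e; exact absurd h' (not_headAux_appList hh _ _)
  | @head t u n hd _ ih =>
    cases h' with
    | lam => cases hd
    | spine hh => exact absurd hd (not_headAux_appList hh _ _)
    | head hd₂ h₂ => exact ih (hd.deterministic hd₂ ▸ h₂)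

/-- Algebraic contexts contribute no β-redex: the normal form of `dσ` is `dσ'`, where `σ'`
normalizes `σ` on the variables of `d`. -/
theorem Eval.subst_algebraic {d : Tm Sig} (hd : Algebraic d) {σ σ' : ℕ → Tm Sig}
    (h : ∀ n, FVar d n → Eval (σ n) (σ' n)) : Eval (Tm.subst σ d) (Tm.subst σ' d) := by
  induction hd with
  | var n => exact h n rfl
  | symApp f ts _ ih =>
    have key := Eval.spine (atom_sym f) (ts.map fun t => (Tm.subst σ t, Tm.subst σ' t)) (by
      intro p hp
      obtain ⟨t, ht, rfl⟩ := List.mem_map.1 hp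
      exact ih t ht fun n hn => h n (fvar_appList.2 (Or.inr ⟨t, ht, hn⟩)))
    simp only [List.map_map] at key
    rw [subst_appList, subst_appList]
    exact key

/-! ### Standardization -/

/-- Standard reductions: reach the head shape of the target by head β-steps, then continue
inside the immediate subterms. -/
inductive Std {Sig : Type} : Tm Sig → Tm Sig → Prop
  | var {t : Tm Sig} (n : ℕ) : Relation.ReflTransGen HeadAux t (Tm.var n) → Std t (Tm.var n)
  | sym {t : Tm Sig} (f : Sig) : Relation.ReflTransGen HeadAux t (Tm.sym f) → Std t (Tm.sym f)
  | app {t b c b' c' : Tm Sig} : Relation.ReflTransGen HeadAux t (Tm.app b c) →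
      Std b b' → Std c c' → Std t (Tm.app b' c')
  | lam {t b b' : Tm Sig} : Relation.ReflTransGen HeadAux t (Tm.lam b) →
      Std b b' → Std t (Tm.lam b')

theorem Std.refl (t : Tm Sig) : Std t t := by
  induction t with
  | var n => exact .var n .refl
  | app t u iht ihu => exact .app .refl iht ihu
  | lam t ih => exact .lam .refl ih
  | sym f => exact .sym f .refl

theorem Std.heads {t u v : Tm Sig} (h : Relation.ReflTransGen HeadAux t u) (hu : Std u v) :
    Std t v := by
  cases hu with
  | var n h' => exact .var n (h.trans h')
  | sym f h' => exact .sym f (h.trans h')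
  | app h' h1 h2 => exact .app (h.trans h') h1 h2
  | lam h' h1 => exact .lam (h.trans h') h1

theorem heads_subst {t u : Tm Sig} (h : Relation.ReflTransGen HeadAux t u) (σ : ℕ → Tm Sig) :
    Relation.ReflTransGen HeadAux (Tm.subst σ t) (Tm.subst σ u) :=
  h.lift _ fun _ _ h => h.subst σ

theorem Std.subst_left {t u : Tm Sig} (h : Std t u) (σ : ℕ → Tm Sig) :
    Std (Tm.subst σ t) (Tm.subst σ u) := by
  induction h generalizing σ with
  | var n h => exact .heads (heads_subst h σ) (.refl _)
  | sym f h => exact .sym f (heads_subst h σ)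
  | app h _ _ ih1 ih2 => exact .app (heads_subst h σ) (ih1 σ) (ih2 σ)
  | lam h _ ih => exact .lam (heads_subst h σ) (ih _)

theorem Std.subst {t u : Tm Sig} (h : Std t u) {σ τ : ℕ → Tm Sig}
    (hστ : ∀ n, Std (σ n) (τ n)) : Std (Tm.subst σ t) (Tm.subst τ u) := by
  induction h generalizing σ τ with
  | var n h => exact .heads (heads_subst h σ) (hστ n)
  | sym f h => exact .sym f (heads_subst h σ)
  | app h _ _ ih1 ih2 => exact .app (heads_subst h σ) (ih1 hστ) (ih2 hστ)
  | lam h _ ih =>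
    refine .lam (heads_subst h σ) (ih fun n => ?_)
    cases n with
    | zero => exact .refl _
    | succ k =>
      simp only [Tm.up, lift_zero_eq_subst]
      exact (hστ k).subst_left _

theorem Std.subst1 {t t' u u' : Tm Sig} (h : Std t t') (hu : Std u u') :
    Std (Tm.subst1 u t) (Tm.subst1 u' t') := by
  refine h.subst fun n => ?_
  cases n with
  | zero => exact hu
  | succ k => exact .refl _

theorem heads_app {t u : Tm Sig} (h : Relation.ReflTransGen HeadAux t u) (v : Tm Sig) :
    Relation.ReflTransGen HeadAux (Tm.app t v) (Tm.app u v) :=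
  h.lift (fun x => Tm.app x v) fun _ _ h => .app v h

/-- A standard reduction followed by a β-step can be rearranged into a standard reduction. -/
theorem Std.betaS {t u v : Tm Sig} (h : Std t u) (hb : BetaS u v) : Std t v := by
  induction hb generalizing t with
  | beta b c =>
    cases h with
    | app h1 h2 h3 =>
      cases h2 with
      | lam h4 h5 =>
        exact .heads ((h1.trans (heads_app h4 _)).tail (.beta _ _)) (h5.subst1 h3)
  | abs _ ih =>
    cases h with
    | lam h1 h2 => exact .lam h1 (ih h2)
  | appL _ ih =>
    cases h with
    | app h1 h2 h3 => exact .app h1 (ih h2) h3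
  | appR _ ih =>
    cases h with
    | app h1 h2 h3 => exact .app h1 h2 (ih h3)

theorem Std.of_betas {t u : Tm Sig} (h : Relation.ReflTransGen Beta t u) : Std t u := by
  induction h with
  | refl => exact .refl _
  | tail _ h ih => exact ih.betaS h.toBetaS

/-- A standard reduction to a normal form is a normal-order evaluation. The second component
records that a neutral normal form is reached by head steps to a spine, followed by evaluation
of its arguments; this is what allows one more argument to be appended. -/
theorem Std.eval_aux {t n : Tm Sig} (h : Std t n) (hn : BetaNormal n) :
    Eval t n ∧ ((∀ b, n ≠ Tm.lam b) → ∃ (h : Tm Sig) (l : List (Tm Sig × Tm Sig)),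
      Atom h ∧ (∀ p ∈ l, Eval p.1 p.2) ∧ n = Tm.appList h (l.map Prod.snd) ∧
      Relation.ReflTransGen HeadAux t (Tm.appList h (l.map Prod.fst))) := by
  induction h with
  | var n h =>
    exact ⟨.heads h (.spine (Or.inl ⟨n, rfl⟩) [] (by simp)),
      fun _ => ⟨_, [], Or.inl ⟨n, rfl⟩, by simp, rfl, h⟩⟩
  | sym f h =>
    exact ⟨.heads h (.spine (atom_sym f) [] (by simp)),
      fun _ => ⟨_, [], atom_sym f, by simp, rfl, h⟩⟩
  | @app t b c b' c' h _ _ ih1 ih2 =>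
    obtain ⟨-, ih1⟩ := ih1 fun u hu => hn _ (.appL hu)
    obtain ⟨hc, -⟩ := ih2 fun u hu => hn _ (.appR hu)
    have hb' : ∀ x, b' ≠ Tm.lam x := by
      rintro x rfl
      exact hn _ (.beta _ _)
    obtain ⟨x, l, hx, hl, rfl, hr⟩ := ih1 hb'
    have hl' : ∀ p ∈ l ++ [(c, c')], Eval p.1 p.2 := by
      intro p hp
      rcases List.mem_append.1 hp with hp | hp
      · exact hl p hp
      · rw [List.mem_singleton.1 hp]
        exact hc
    have e : Tm.app (Tm.appList x (l.map Prod.snd)) c' =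
        Tm.appList x ((l ++ [(c, c')]).map Prod.snd) := by
      simp [appList_snoc]
    have hr' : Relation.ReflTransGen HeadAux t
        (Tm.appList x ((l ++ [(c, c')]).map Prod.fst)) := by
      simp only [List.map_append, List.map_cons, List.map_nil, appList_snoc]
      exact h.trans (heads_app hr _)
    exact ⟨e ▸ .heads hr' (.spine hx _ hl'), fun _ => ⟨x, _, hx, hl', e, hr'⟩⟩
  | @lam t b b' h _ ih =>
    exact ⟨.heads h (.lam (ih fun u hu => hn _ (.abs hu)).1), fun hl => absurd rfl (hl _)⟩

/-- Normal-order evaluation finds every β-normal form. -/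
theorem IsBnf.eval {t n : Tm Sig} (h : IsBnf t n) : Eval t n :=
  ((Std.of_betas h.1).eval_aux h.2).1

end Eval

/-! ### Projection onto β-normal forms -/

section Projection

variable {Sig : Type}

/-- `Projects a R S t n`: every `R`-step from `t` leads to a term whose β-normal form respects
`a` and is an `S`-reduct of `n`. -/
def Projects (a : Sig → ℕ) (R S : Tm Sig → Tm Sig → Prop) (t n : Tm Sig) : Prop :=
  ∀ u, R t u → ∃ m, Eval u m ∧ RespectsArity a m ∧ Relation.ReflTransGen S n m

theorem condStep_appList {Rules : Set (CondRule Sig)} {prev : Tm Sig → Tm Sig → Prop}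
    {ts us : List (Tm Sig)}
    (H : List.Forall₂ (Relation.ReflTransGen (CondStep Rules prev)) ts us) (h : Tm Sig) :
    Relation.ReflTransGen (CondStep Rules prev) (appList h ts) (appList h us) :=
  rtg_appList (fun _ _ _ => CondStep.appL) (fun _ _ _ => CondStep.appR) H .refl

theorem condSteps_subst {Rules : Set (CondRule Sig)} {prev : Tm Sig → Tm Sig → Prop}
    {r : Tm Sig} (hr : Algebraic r) {σ τ : ℕ → Tm Sig}
    (h : ∀ n, FVar r n → Relation.ReflTransGen (CondStep Rules prev) (σ n) (τ n)) :
    Relation.ReflTransGen (CondStep Rules prev) (subst σ r) (subst τ r) := by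
  induction hr with
  | var n => exact h n rfl
  | symApp f ts _ ih =>
    rw [subst_appList, subst_appList]
    refine condStep_appList ?_ _
    rw [List.forall₂_map_left_iff, List.forall₂_map_right_iff, List.forall₂_same]
    exact fun t ht => ih t ht fun n hn => h n (fvar_appList.2 (Or.inr ⟨t, ht, hn⟩))

theorem projects_args {a : Sig → ℕ} {R S : Tm Sig → Tm Sig → Prop}
    {l : List (Tm Sig × Tm Sig)} (hl : ∀ p ∈ l, Projects a R S p.1 p.2) {us : List (Tm Sig)}
    (h : List.Forall₂ R (l.map Prod.fst) us) :
    ∃ l' : List (Tm Sig × Tm Sig), l'.map Prod.fst = us ∧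
      (∀ p ∈ l', Eval p.1 p.2 ∧ RespectsArity a p.2) ∧
      List.Forall₂ (Relation.ReflTransGen S) (l.map Prod.snd) (l'.map Prod.snd) := by
  induction l generalizing us with
  | nil =>
    cases h
    exact ⟨[], rfl, by simp, .nil⟩
  | cons p l ih =>
    simp only [List.map_cons] at h
    cases h with
    | @cons _ u _ us h1 h2 =>
      obtain ⟨l', rfl, h3, h4⟩ := ih (fun q hq => hl q (by simp [hq])) h2
      obtain ⟨m, h5, h6, h7⟩ := hl p (by simp) u h1
      refine ⟨(u, m) :: l', rfl, ?_, .cons h7 h4⟩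
      intro q hq
      rcases List.mem_cons.1 hq with rfl | hq
      · exact ⟨h5, h6⟩
      · exact h3 q hq

/-- The case of a rule contracted at the root: if the values of the rule's variables project
and the conditions can be transported to normal forms, then the contraction projects. -/
theorem projects_rule {a : Sig → ℕ} {Rules : Set (CondRule Sig)}
    {prev : Tm Sig → Tm Sig → Prop} (halg : AlgebraicSys Rules)
    (harr : SysRespectsArity a Rules)
    (hproj : ∀ t n, Eval t n → RespectsArity a n →
      Projects a (Relation.ReflTransGen prev) prev t n)
    {ρ : CondRule Sig} (hρ : ρ ∈ Rules) {σ τ : ℕ → Tm Sig}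
    (hc : ∀ p ∈ ρ.conds, Joinable prev (subst σ p.1) (subst σ p.2))
    (hστ : ∀ n, Par Rules prev (σ n) (τ n))
    (hvars : ∀ x, FVar ρ.lhs x → ∃ m, Eval (σ x) m ∧ RespectsArity a m ∧
      Projects a (Par Rules prev) (CondStep Rules prev) (σ x) m)
    {n : Tm Sig} (hn : Eval (subst σ ρ.lhs) n) :
    ∃ m, Eval (subst τ ρ.rhs) m ∧ RespectsArity a m ∧
      Relation.ReflTransGen (CondStep Rules prev) n m := by
  have hex : ∀ x, ∃ m m', FVar ρ.lhs x → Eval (σ x) m ∧ RespectsArity a m ∧ Eval (τ x) m' ∧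
      RespectsArity a m' ∧ Relation.ReflTransGen (CondStep Rules prev) m m' := by
    intro x
    by_cases hx : FVar ρ.lhs x
    · obtain ⟨m, h1, h2, h3⟩ := hvars x hx
      obtain ⟨m', h4, h5, h6⟩ := h3 _ (hστ x)
      exact ⟨m, m', fun _ => ⟨h1, h2, h4, h5, h6⟩⟩
    · exact ⟨var x, var x, fun h => absurd h hx⟩
  choose σ' τ' h' using hex
  obtain ⟨halgc, halgr⟩ := halg ρ hρ
  obtain ⟨harrc, _, harrr, _⟩ := harr ρ hρ
  obtain rfl : n = subst σ' ρ.lhs :=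
    hn.deterministic (Eval.subst_algebraic ρ.lhs_alg fun x hx => (h' x hx).1)
  have hc' : ∀ p ∈ ρ.conds, Joinable prev (subst σ' p.1) (subst σ' p.2) := by
    intro p hp
    obtain ⟨v, hv1, hv2⟩ := hc p hp
    obtain ⟨fv1, fv2⟩ := ρ.fv_conds p hp
    obtain ⟨m1, e1, _, r1⟩ := hproj _ _
      (Eval.subst_algebraic (halgc p hp).1 fun x hx => (h' x (fv1 x hx)).1)
      (respectsArity_subst a (halgc p hp).1 (harrc p hp).1 fun x hx => (h' x (fv1 x hx)).2.1)
      v hv1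
    obtain ⟨m2, e2, _, r2⟩ := hproj _ _
      (Eval.subst_algebraic (halgc p hp).2 fun x hx => (h' x (fv2 x hx)).1)
      (respectsArity_subst a (halgc p hp).2 (harrc p hp).2 fun x hx => (h' x (fv2 x hx)).2.1)
      v hv2
    obtain rfl := e1.deterministic e2
    exact ⟨m1, r1, r2⟩
  refine ⟨subst τ' ρ.rhs, ?_, ?_, ?_⟩
  · exact Eval.subst_algebraic halgr fun x hx => (h' x (ρ.fv_rhs x hx)).2.2.1
  · exact respectsArity_subst a halgr harrr fun x hx => (h' x (ρ.fv_rhs x hx)).2.2.2.1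
  · exact .head (.rule hρ σ' hc')
      (condSteps_subst halgr fun x hx => (h' x (ρ.fv_rhs x hx)).2.2.2.2)

/-- One parallel step projects onto normal forms. The induction over `Eval` carries a second
component, giving the same conclusion for the values of the variables of any algebraic pattern
that `t` matches: a rule may bind variables below the immediate arguments of the redex. -/
theorem projects_par_aux {a : Sig → ℕ} {Rules : Set (CondRule Sig)}
    {prev : Tm Sig → Tm Sig → Prop} (halg : AlgebraicSys Rules)
    (harr : SysRespectsArity a Rules) (hp : SubstClosed prev)
    (hproj : ∀ t n, Eval t n → RespectsArity a n →
      Projects a (Relation.ReflTransGen prev) prev t n)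
    {t n : Tm Sig} (h : Eval t n) (hn : RespectsArity a n) :
    Projects a (Par Rules prev) (CondStep Rules prev) t n ∧
    ∀ l, Algebraic l → ∀ σ, t = subst σ l → ∀ x, FVar l x →
      ∃ m, Eval (σ x) m ∧ RespectsArity a m ∧
        Projects a (Par Rules prev) (CondStep Rules prev) (σ x) m := by
  induction h with
  | @lam t n h ih =>
    obtain ⟨ih, -⟩ := ih ((respectsArity_lam a n).1 hn)
    have P : Projects a (Par Rules prev) (CondStep Rules prev) (Tm.lam t) (Tm.lam n) := by
      intro u hu
      obtain ⟨t', rfl, ht'⟩ := hu.lam_inv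
      obtain ⟨m, h1, h2, h3⟩ := ih t' ht'
      exact ⟨Tm.lam m, .lam h1, (respectsArity_lam a m).2 h2,
        h3.lift Tm.lam fun _ _ => CondStep.abs⟩
    refine ⟨P, fun l hl σ e x hx => ?_⟩
    cases hl with
    | var k =>
      obtain rfl : k = x := hx
      have e : σ k = Tm.lam t := e.symm
      rw [e]
      exact ⟨_, .lam h, hn, P⟩
    | symApp f ts _ =>
      rw [subst_appList] at e
      exact absurd e.symm (appList_ne_lam (atom_sym f) _ _)
  | @spine h hh l hl ih =>
    obtain ⟨hlen, hargs⟩ := (respectsArity_appList a hh _).1 hn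
    have ih := fun p (hpl : p ∈ l) => ih p hpl (hargs p.2 (List.mem_map_of_mem hpl))
    have Q : ∀ (f : Sig) (ts : List (Tm Sig)), (∀ s ∈ ts, Algebraic s) → ∀ σ : ℕ → Tm Sig,
        appList h (l.map Prod.fst) = subst σ (appList (Tm.sym f) ts) →
        ∀ x, FVar (appList (Tm.sym f) ts) x →
        ∃ m, Eval (σ x) m ∧ RespectsArity a m ∧
          Projects a (Par Rules prev) (CondStep Rules prev) (σ x) m := by
      intro f ts hts σ e x hx
      rw [subst_appList] at e
      obtain ⟨_, e⟩ := appList_inj hh (atom_sym f) _ _ e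
      rcases fvar_appList.1 hx with hx | ⟨s, hs, hx⟩
      · exact hx.elim
      · have hs' : subst σ s ∈ l.map Prod.fst := e ▸ List.mem_map_of_mem hs
        obtain ⟨p, hpl, hps⟩ := List.mem_map.1 hs'
        exact (ih p hpl).2 s (hts s hs) σ hps x hx
    have P : Projects a (Par Rules prev) (CondStep Rules prev)
        (appList h (l.map Prod.fst)) (appList h (l.map Prod.snd)) := by
      intro u hu
      rcases hu.appList_inv harr hh (by simpa using hlen) with
        ⟨us, rfl, hus⟩ | ⟨ρ, hρ, σ, τ, hc, hστ, e, rfl⟩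
      · obtain ⟨l', rfl, h1, h2⟩ := projects_args (fun p hpl => (ih p hpl).1) hus
        refine ⟨_, .spine hh l' fun p hpl => (h1 p hpl).1, ?_, condStep_appList h2 _⟩
        refine (respectsArity_appList a hh _).2 ⟨?_, ?_⟩
        · rw [← h2.length_eq]
          exact hlen
        · intro s hs
          obtain ⟨p, hpl, rfl⟩ := List.mem_map.1 hs
          exact (h1 p hpl).2
      · have hE := Eval.spine hh l hl
        rw [e] at hE
        refine projects_rule halg harr hproj hρ hc hστ (fun x hx => ?_) hE
        have h1 := ρ.lhs_alg
        have h2 := ρ.lhs_not_var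
        generalize ρ.lhs = lhs at h1 h2 e hx
        cases h1 with
        | var k => exact absurd rfl (h2 k)
        | symApp f ts hts => exact Q f ts hts σ e x hx
    refine ⟨P, fun d hd σ e x hx => ?_⟩
    cases hd with
    | var k =>
      obtain rfl : k = x := hx
      have e : σ k = appList h (l.map Prod.fst) := e.symm
      rw [e]
      exact ⟨_, .spine hh l hl, hn, P⟩
    | symApp f ts hts => exact Q f ts hts σ e x hx
  | @head t t' n hd h ih =>
    obtain ⟨ih, -⟩ := ih hn
    have P : Projects a (Par Rules prev) (CondStep Rules prev) t n := by
      intro u hu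
      obtain ⟨u', h1, h2⟩ := hu.head_commute hp hd
      obtain ⟨m, h3, h4, h5⟩ := ih u' h1
      rcases h2 with rfl | h2
      · exact ⟨m, h3, h4, h5⟩
      · exact ⟨m, .head h2 h3, h4, h5⟩
    refine ⟨P, fun l hl σ e x hx => ?_⟩
    cases hl with
    | var k =>
      obtain rfl : k = x := hx
      have e : σ k = t := e.symm
      rw [e]
      exact ⟨_, .head hd h, hn, P⟩
    | symApp f ts _ =>
      rw [e, subst_appList] at hd
      exact absurd hd (not_headAux_appList (atom_sym f) _ _)

theorem projects_steps {a : Sig → ℕ} {Rules : Set (CondRule Sig)}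
    {prev : Tm Sig → Tm Sig → Prop} (halg : AlgebraicSys Rules)
    (harr : SysRespectsArity a Rules) (hp : SubstClosed prev)
    (hproj : ∀ t n, Eval t n → RespectsArity a n →
      Projects a (Relation.ReflTransGen prev) prev t n)
    {t n : Tm Sig} (h : Eval t n) (hn : RespectsArity a n) :
    Projects a (Relation.ReflTransGen fun x y => Beta x y ∨ CondStep Rules prev x y)
      (CondStep Rules prev) t n := by
  intro u hu
  induction hu with
  | refl => exact ⟨n, h, hn, .refl⟩
  | @tail u v _ huv ih =>
    obtain ⟨m, h1, h2, h3⟩ := ih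
    obtain ⟨m', h4, h5, h6⟩ := (projects_par_aux halg harr hp hproj h1 h2).1 v
      (huv.elim (Par.of_beta hp) (Par.of_condStep hp))
    exact ⟨m', h4, h5, h3.trans h6⟩

theorem substClosed_condRel (Rules : Set (CondRule Sig)) (i : ℕ) :
    SubstClosed (CondRel Rules i) := by
  cases i with
  | zero => exact fun _ _ _ h => h
  | succ i => exact fun σ _ _ h => .substC σ h

theorem projects_condRel {a : Sig → ℕ} {Rules : Set (CondRule Sig)} (halg : AlgebraicSys Rules)
    (harr : SysRespectsArity a Rules) (i : ℕ) {t n : Tm Sig} (h : Eval t n)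
    (hn : RespectsArity a n) :
    Projects a (Relation.ReflTransGen fun x y => Beta x y ∨ CondRel Rules i x y)
      (CondRel Rules i) t n := by
  induction i generalizing t n with
  | zero =>
    -- Stratum 0 is empty, and coincides with one stratum over the empty system.
    have hemp : CondStep (∅ : Set (CondRule Sig)) (fun _ _ => False) = CondRel Rules 0 := by
      funext x y
      refine propext ⟨fun hxy => ?_, False.elim⟩
      induction hxy with
      | rule hρ => exact hρ
      | abs _ ih | appL _ ih | appR _ ih | substC _ _ ih => exact ih
    rw [← hemp]
    refine projects_steps (fun _ h => h.elim) (fun _ h => h.elim) (fun _ _ _ h => h) ?_ h hn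
    intro t n h hn u hu
    obtain rfl : t = u := by
      induction hu with
      | refl => rfl
      | tail _ h _ => exact h.elim
    exact ⟨n, h, hn, .refl⟩
  | succ i ih =>
    refine projects_steps halg harr (substClosed_condRel Rules i) (fun t n h hn u hu => ?_) h hn
    exact ih h hn u (Relation.ReflTransGen.mono (fun _ _ => Or.inr) _ _ hu)

end Projection

/-- For an algebraic system `R` respecting the arity `a`: for every `i`,
if `t ∈ AN_a` and `t →*_{β ∪ R_i} u`, then `u ∈ AN_a` and `βnf(t) →*_{R_i} βnf(u)`. -/
theorem projection_on_bnf_cond {Sig : Type} (a : Sig → ℕ) (Rules : Set (CondRule Sig))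
    (halg : AlgebraicSys Rules) (harr : SysRespectsArity a Rules)
    (i : ℕ) (t u : Tm Sig) (ht : t ∈ ANset a)
    (hred : Relation.ReflTransGen (fun x y : Tm Sig => Beta x y ∨ CondRel Rules i x y) t u) :
    u ∈ ANset a ∧ ∀ nt nu : Tm Sig, IsBnf t nt → IsBnf u nu →
      Relation.ReflTransGen (CondRel Rules i) nt nu := by
  obtain ⟨n, hn, han⟩ := ht
  obtain ⟨m, hm, ham, hnm⟩ := projects_condRel halg harr i hn.eval han u hred
  refine ⟨⟨m, hm.isBnf, ham⟩, fun nt nu hnt hnu => ?_⟩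
  rw [hnt.eval.deterministic hn.eval, hnu.eval.deterministic hm]
  exact hnm
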